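/- arXiv:1910.06657 — 2 statements merged into one kernel-verified Lean document; each statement's English description precedes it below -/
import Mathlib

section
/- The substitution rule (sub) is height-preserving admissible in LNIF: for all parameters a and b, if a linear nested sequent 𝒢 has an LNIF derivation of height h, then 𝒢[b/a], the result of replacing every occurrence of the parameter a in 𝒢 by b, has an LNIF derivation of height at most h. -/
/-! Only the eigenvariable rules obstruct a direct induction on the derivation: renaming `a` to `b`
could identify the eigenvariable `c` with a parameter of the conclusion. The usual remedy, first
renaming `c` to a fresh parameter, is unavailable when `α` is finite, so the induction is carried
out over a class of renamings (`Renaming`) consisting of all injective maps together with all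
replacements `[b/a]`. For `f` in this class and any `c` there is a `g` in the class which agrees
with `f` off `c` and sends `c` to a value not taken elsewhere (`Renaming.separate`): for
`f = [b/a]` take `g = id` if `c = a`, the transposition of `a` and `b` if `c = b`, and `g = f`
otherwise. Since `c` does not occur in the conclusion of an eigenvariable rule, `f` and `g` act
identically on that conclusion, and applying the induction hypothesis for `g` to the premises gives
an instance of the same rule. Every rule is thus mapped to an instance of itself, so that the
height is even preserved exactly (`LNIFh.map`). -/


/-- First-order formulas: atoms are predicate symbols (indexed by `ℕ`) applied to
arguments that are either bound variables (`Sum.inl`, named by `ℕ`) or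
parameters (`Sum.inr`, drawn from `α`). -/
inductive Formula (α : Type) : Type
  | atom : ℕ → List (ℕ ⊕ α) → Formula α
  | bot  : Formula α
  | or   : Formula α → Formula α → Formula α
  | and  : Formula α → Formula α → Formula α
  | imp  : Formula α → Formula α → Formula α
  | all  : ℕ → Formula α → Formula α
  | ex   : ℕ → Formula α → Formula α

namespace Formula

/-- `A.substP a x` is `A[a/x]`: substitute the parameter `a` for all free
occurrences of the variable `x` in `A`. -/
def substP {α : Type} (a : α) (x : ℕ) : Formula α → Formula α
  | atom p ts => atom p (ts.map (fun t => match t with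
      | Sum.inl y => if y = x then Sum.inr a else Sum.inl y
      | Sum.inr b => Sum.inr b))
  | bot => bot
  | or A B => or (A.substP a x) (B.substP a x)
  | and A B => and (A.substP a x) (B.substP a x)
  | imp A B => imp (A.substP a x) (B.substP a x)
  | all y A => all y (if y = x then A else A.substP a x)
  | ex y A => ex y (if y = x then A else A.substP a x)

/-- The parameters occurring in a formula. -/
def params {α : Type} : Formula α → List α
  | atom _ ts => ts.filterMap Sum.getRight?
  | bot => []
  | or A B => A.params ++ B.params
  | and A B => A.params ++ B.params
  | imp A B => A.params ++ B.params
  | all _ A => A.params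
  | ex _ A => A.params

/-- The free variables of a formula. -/
def freeVars {α : Type} : Formula α → List ℕ
  | atom _ ts => ts.filterMap Sum.getLeft?
  | bot => []
  | or A B => A.freeVars ++ B.freeVars
  | and A B => A.freeVars ++ B.freeVars
  | imp A B => A.freeVars ++ B.freeVars
  | all x A => A.freeVars.filter (fun y => y != x)
  | ex x A => A.freeVars.filter (fun y => y != x)

/-- Apply a function to every parameter of a formula. -/
def mapParam {α β : Type} (f : α → β) : Formula α → Formula β
  | atom p ts => atom p (ts.map (Sum.map id f))
  | bot => bot
  | or A B => or (A.mapParam f) (B.mapParam f)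
  | and A B => and (A.mapParam f) (B.mapParam f)
  | imp A B => imp (A.mapParam f) (B.mapParam f)
  | all x A => all x (A.mapParam f)
  | ex x A => ex x (A.mapParam f)

end Formula

/-- A linear nested sequent: a list of components `Γ ⊢ Δ`, each a pair of
finite multisets of formulas. -/
abbrev LNS (α : Type) := List (Multiset (Formula α) × Multiset (Formula α))

/-- The parameter `a` occurs somewhere in the linear nested sequent `G`. -/
def occursInLNS {α : Type} (a : α) (G : LNS α) : Prop :=
  ∃ C ∈ G, (∃ B ∈ C.1, a ∈ B.params) ∨ (∃ B ∈ C.2, a ∈ B.params)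

/-- `LNIFh h G`: the linear nested sequent `G` has an `LNIF` derivation of
height `h` (the number of sequents on the longest branch). -/
inductive LNIFh {α : Type} : ℕ → LNS α → Prop
  | id1 (G H : LNS α) (Γ Δ : Multiset (Formula α)) (p : ℕ) (ts : List (ℕ ⊕ α)) :
      LNIFh 1 (G ++ [(Γ + {Formula.atom p ts}, {Formula.atom p ts} + Δ)] ++ H)
  | id2 (G H F : LNS α) (Γ₁ Δ₁ Γ₂ Δ₂ : Multiset (Formula α)) (p : ℕ) (ts : List (ℕ ⊕ α)) :
      LNIFh 1 (G ++ [(Γ₁ + {Formula.atom p ts}, Δ₁)] ++ H ++ [(Γ₂, {Formula.atom p ts} + Δ₂)] ++ F)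
  | botl (G H : LNS α) (Γ Δ : Multiset (Formula α)) :
      LNIFh 1 (G ++ [(Γ + {Formula.bot}, Δ)] ++ H)
  | andl (n : ℕ) (G H : LNS α) (Γ Δ : Multiset (Formula α)) (A B : Formula α) :
      LNIFh n (G ++ [(Γ + {A, B}, Δ)] ++ H) →
      LNIFh (n + 1) (G ++ [(Γ + {A.and B}, Δ)] ++ H)
  | andr (n m : ℕ) (G H : LNS α) (Γ Δ : Multiset (Formula α)) (A B : Formula α) :
      LNIFh n (G ++ [(Γ, Δ + {A})] ++ H) → LNIFh m (G ++ [(Γ, Δ + {B})] ++ H) →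
      LNIFh (max n m + 1) (G ++ [(Γ, Δ + {A.and B})] ++ H)
  | orl (n m : ℕ) (G H : LNS α) (Γ Δ : Multiset (Formula α)) (A B : Formula α) :
      LNIFh n (G ++ [(Γ + {A}, Δ)] ++ H) → LNIFh m (G ++ [(Γ + {B}, Δ)] ++ H) →
      LNIFh (max n m + 1) (G ++ [(Γ + {A.or B}, Δ)] ++ H)
  | orr (n : ℕ) (G H : LNS α) (Γ Δ : Multiset (Formula α)) (A B : Formula α) :
      LNIFh n (G ++ [(Γ, Δ + {A, B})] ++ H) →
      LNIFh (n + 1) (G ++ [(Γ, Δ + {A.or B})] ++ H)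
  | impl (n m : ℕ) (G H : LNS α) (Γ Δ : Multiset (Formula α)) (A B : Formula α) :
      LNIFh n (G ++ [(Γ + {B}, Δ)] ++ H) →
      LNIFh m (G ++ [(Γ + {A.imp B}, {A} + Δ)] ++ H) →
      LNIFh (max n m + 1) (G ++ [(Γ + {A.imp B}, Δ)] ++ H)
  | impr1 (n : ℕ) (G : LNS α) (Γ Δ : Multiset (Formula α)) (A B : Formula α) :
      LNIFh n (G ++ [(Γ, Δ), ({A}, {B})]) →
      LNIFh (n + 1) (G ++ [(Γ, Δ + {A.imp B})])
  | impr2 (n m : ℕ) (G H : LNS α) (Γ₁ Δ₁ Γ₂ Δ₂ : Multiset (Formula α)) (A B : Formula α) :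
      LNIFh n (G ++ [(Γ₁, Δ₁), ({A}, {B}), (Γ₂, Δ₂)] ++ H) →
      LNIFh m (G ++ [(Γ₁, Δ₁), (Γ₂, Δ₂ + {A.imp B})] ++ H) →
      LNIFh (max n m + 1) (G ++ [(Γ₁, Δ₁ + {A.imp B}), (Γ₂, Δ₂)] ++ H)
  | lift (n : ℕ) (G H : LNS α) (Γ₁ Δ₁ Γ₂ Δ₂ : Multiset (Formula α)) (A : Formula α) :
      LNIFh n (G ++ [(Γ₁ + {A}, Δ₁), (Γ₂ + {A}, Δ₂)] ++ H) →
      LNIFh (n + 1) (G ++ [(Γ₁ + {A}, Δ₁), (Γ₂, Δ₂)] ++ H)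
  | alll (n : ℕ) (G H : LNS α) (Γ Δ : Multiset (Formula α)) (A : Formula α) (x : ℕ) (a : α) :
      LNIFh n (G ++ [(Γ + {A.substP a x, Formula.all x A}, Δ)] ++ H) →
      LNIFh (n + 1) (G ++ [(Γ + {Formula.all x A}, Δ)] ++ H)
  | allr1 (n : ℕ) (G : LNS α) (Γ Δ : Multiset (Formula α)) (A : Formula α) (x : ℕ) (a : α) :
      ¬ occursInLNS a (G ++ [(Γ, Δ + {Formula.all x A})]) →
      LNIFh n (G ++ [(Γ, Δ), (0, {A.substP a x})]) →
      LNIFh (n + 1) (G ++ [(Γ, Δ + {Formula.all x A})])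
  | allr2 (n m : ℕ) (G H : LNS α) (Γ₁ Δ₁ Γ₂ Δ₂ : Multiset (Formula α)) (A : Formula α) (x : ℕ) (a : α) :
      ¬ occursInLNS a (G ++ [(Γ₁, Δ₁ + {Formula.all x A}), (Γ₂, Δ₂)] ++ H) →
      LNIFh n (G ++ [(Γ₁, Δ₁), (0, {A.substP a x}), (Γ₂, Δ₂)] ++ H) →
      LNIFh m (G ++ [(Γ₁, Δ₁), (Γ₂, Δ₂ + {Formula.all x A})] ++ H) →
      LNIFh (max n m + 1) (G ++ [(Γ₁, Δ₁ + {Formula.all x A}), (Γ₂, Δ₂)] ++ H)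
  | exl (n : ℕ) (G H : LNS α) (Γ Δ : Multiset (Formula α)) (A : Formula α) (x : ℕ) (a : α) :
      ¬ occursInLNS a (G ++ [(Γ + {Formula.ex x A}, Δ)] ++ H) →
      LNIFh n (G ++ [(Γ + {A.substP a x}, Δ)] ++ H) →
      LNIFh (n + 1) (G ++ [(Γ + {Formula.ex x A}, Δ)] ++ H)
  | exr (n : ℕ) (G H : LNS α) (Γ Δ : Multiset (Formula α)) (A : Formula α) (x : ℕ) (a : α) :
      LNIFh n (G ++ [(Γ, {A.substP a x} + Δ)] ++ H) →
      LNIFh (n + 1) (G ++ [(Γ, {Formula.ex x A} + Δ)] ++ H)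

/-- `A.renP b a`: replace every occurrence of the parameter `a` in `A` by `b`. -/
def Formula.renP {α : Type} [DecidableEq α] (b a : α) : Formula α → Formula α :=
  Formula.mapParam (fun c => if c = a then b else c)

/-- `G[b/a]`: replace every occurrence of the parameter `a` in the linear
nested sequent `G` by `b`. -/
def renLNS {α : Type} [DecidableEq α] (b a : α) (G : LNS α) : LNS α :=
  G.map (fun C => (C.1.map (Formula.renP b a), C.2.map (Formula.renP b a)))

/-! ### Renaming parameters in formulas and sequents -/

namespace Formula

variable {α β : Type}

theorem mapParam_substP (f : α → β) (c : α) (x : ℕ) (A : Formula α) :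
    (A.substP c x).mapParam f = (A.mapParam f).substP (f c) x := by
  induction A with
  | atom p ts =>
    simp only [substP, mapParam, List.map_map, atom.injEq, true_and]
    refine List.map_congr_left fun t _ => ?_
    rcases t with y | d
    · by_cases h : y = x <;> simp [h]
    · simp
  | bot => rfl
  | or A B ihA ihB => simp [substP, mapParam, ihA, ihB]
  | and A B ihA ihB => simp [substP, mapParam, ihA, ihB]
  | imp A B ihA ihB => simp [substP, mapParam, ihA, ihB]
  | all y A ih => by_cases h : y = x <;> simp [substP, mapParam, ih, h]
  | ex y A ih => by_cases h : y = x <;> simp [substP, mapParam, ih, h]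

theorem params_mapParam (f : α → β) (A : Formula α) :
    (A.mapParam f).params = A.params.map f := by
  induction A with
  | atom p ts =>
    induction ts with
    | nil => rfl
    | cons t ts ih =>
      simp only [params, mapParam] at ih
      rcases t with y | d <;> simp [params, mapParam, List.filterMap_cons, ih]
  | bot => rfl
  | or A B ihA ihB => simp [params, mapParam, ihA, ihB]
  | and A B ihA ihB => simp [params, mapParam, ihA, ihB]
  | imp A B ihA ihB => simp [params, mapParam, ihA, ihB]
  | all y A ih => simpa [params, mapParam] using ih
  | ex y A ih => simpa [params, mapParam] using ih

theorem mapParam_congr {f g : α → β} (A : Formula α) (h : ∀ d ∈ A.params, f d = g d) :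
    A.mapParam f = A.mapParam g := by
  induction A with
  | atom p ts =>
    simp only [mapParam, atom.injEq, true_and]
    refine List.map_congr_left fun t ht => ?_
    rcases t with y | d
    · rfl
    · have hd : d ∈ (atom p ts).params := by
        simp only [params, List.mem_filterMap]
        exact ⟨_, ht, rfl⟩
      simp [h d hd]
  | bot => rfl
  | or A B ihA ihB =>
    simp only [params, List.mem_append] at h
    simp [mapParam, ihA fun d hd => h d (.inl hd), ihB fun d hd => h d (.inr hd)]
  | and A B ihA ihB =>
    simp only [params, List.mem_append] at h
    simp [mapParam, ihA fun d hd => h d (.inl hd), ihB fun d hd => h d (.inr hd)]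
  | imp A B ihA ihB =>
    simp only [params, List.mem_append] at h
    simp [mapParam, ihA fun d hd => h d (.inl hd), ihB fun d hd => h d (.inr hd)]
  | all y A ih => simp [mapParam, ih h]
  | ex y A ih => simp [mapParam, ih h]

end Formula

/-- Apply a function to every parameter of a linear nested sequent. -/
def mapLNS {α : Type} (f : α → α) (G : LNS α) : LNS α :=
  G.map (fun C => (C.1.map (Formula.mapParam f), C.2.map (Formula.mapParam f)))

theorem mapLNS_congr {α : Type} {f g : α → α} (G : LNS α)
    (h : ∀ d, occursInLNS d G → f d = g d) : mapLNS f G = mapLNS g G := by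
  refine List.map_congr_left fun C hC => Prod.ext ?_ ?_
  · exact Multiset.map_congr rfl fun B hB =>
      B.mapParam_congr fun d hd => h d ⟨C, hC, .inl ⟨B, hB, hd⟩⟩
  · exact Multiset.map_congr rfl fun B hB =>
      B.mapParam_congr fun d hd => h d ⟨C, hC, .inr ⟨B, hB, hd⟩⟩

theorem occursInLNS_mapLNS {α : Type} {f : α → α} {e : α} {G : LNS α}
    (h : occursInLNS e (mapLNS f G)) : ∃ d, occursInLNS d G ∧ f d = e := by
  obtain ⟨_, hC', h⟩ := h
  obtain ⟨C, hC, rfl⟩ := List.mem_map.1 hC'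
  rcases h with ⟨_, hB', he⟩ | ⟨_, hB', he⟩ <;>
    obtain ⟨B, hB, rfl⟩ := Multiset.mem_map.1 hB' <;>
    rw [Formula.params_mapParam] at he <;>
    obtain ⟨d, hd, rfl⟩ := List.mem_map.1 he
  · exact ⟨d, ⟨C, hC, .inl ⟨B, hB, hd⟩⟩, rfl⟩
  · exact ⟨d, ⟨C, hC, .inr ⟨B, hB, hd⟩⟩, rfl⟩

/-- The class of maps on parameters over which the induction is carried out: the injective maps and
the replacements of a single parameter by another. -/
def Renaming {α : Type} [DecidableEq α] (f : α → α) : Prop :=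
  Function.Injective f ∨ ∃ a b, f = fun c => if c = a then b else c

theorem Renaming.separate {α : Type} [DecidableEq α] {f : α → α} (hf : Renaming f) (c : α) :
    ∃ g, Renaming g ∧ (∀ d, d ≠ c → f d = g d) ∧ ∀ d, d ≠ c → g d ≠ g c := by
  rcases hf with hf | ⟨a, b, rfl⟩
  · exact ⟨f, .inl hf, fun _ _ => rfl, fun d hd h => hd (hf h)⟩
  by_cases hca : c = a
  · subst hca
    exact ⟨id, .inl Function.injective_id, fun d hd => by simp [hd], fun d hd => hd⟩
  by_cases hcb : c = b
  · subst hcb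
    refine ⟨Equiv.swap a c, .inl (Equiv.injective _), fun d hd => ?_,
      fun d hd h => hd ((Equiv.injective _) h)⟩
    by_cases hda : d = a
    · simp [hda]
    · simp [hda, Equiv.swap_apply_of_ne_of_ne hda hd]
  · refine ⟨_, .inr ⟨a, b, rfl⟩, fun _ _ => rfl, fun d hd => ?_⟩
    by_cases hda : d = a
    · simpa [hda, hca] using Ne.symm hcb
    · simpa [hda, hca] using hd

/-- If `c` satisfies the eigenvariable condition for `G`, then `f` can be altered at `c` so that
the image of `c` satisfies it for the image of `G`. -/
theorem Renaming.eigen {α : Type} [DecidableEq α] {f : α → α} (hf : Renaming f) {c : α}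
    {G : LNS α} (hc : ¬ occursInLNS c G) :
    ∃ g, Renaming g ∧ mapLNS f G = mapLNS g G ∧ ¬ occursInLNS (g c) (mapLNS g G) := by
  obtain ⟨g, hg, hfg, hgc⟩ := hf.separate c
  have hne : ∀ d, occursInLNS d G → d ≠ c := by
    rintro d hd rfl
    exact hc hd
  refine ⟨g, hg, mapLNS_congr G fun d hd => hfg d (hne d hd), fun h => ?_⟩
  obtain ⟨d, hd, he⟩ := occursInLNS_mapLNS h
  exact hgc d (hne d hd) he

/-- Derivability is preserved by every `Renaming`, with the same height. The renaming has to be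
universally quantified in the induction, since the eigenvariable rules change it. -/
theorem LNIFh.map {α : Type} [DecidableEq α] {n : ℕ} {G : LNS α} (hd : LNIFh n G) :
    ∀ f : α → α, Renaming f → LNIFh n (mapLNS f G) := by
  induction hd with
  | id1 G H Γ Δ p ts =>
    intro f _
    simpa [mapLNS, Formula.mapParam] using LNIFh.id1 (mapLNS f G) (mapLNS f H)
      (Γ.map (.mapParam f)) (Δ.map (.mapParam f)) p (ts.map (Sum.map id f))
  | id2 G H F Γ₁ Δ₁ Γ₂ Δ₂ p ts =>
    intro f _
    simpa [mapLNS, Formula.mapParam] using LNIFh.id2 (mapLNS f G) (mapLNS f H) (mapLNS f F)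
      (Γ₁.map (.mapParam f)) (Δ₁.map (.mapParam f)) (Γ₂.map (.mapParam f)) (Δ₂.map (.mapParam f))
      p (ts.map (Sum.map id f))
  | botl G H Γ Δ =>
    intro f _
    simpa [mapLNS, Formula.mapParam] using LNIFh.botl (mapLNS f G) (mapLNS f H)
      (Γ.map (.mapParam f)) (Δ.map (.mapParam f))
  | andl n G H Γ Δ A B _ ih =>
    intro f hf
    simpa [mapLNS, Formula.mapParam] using LNIFh.andl n (mapLNS f G) (mapLNS f H)
      (Γ.map (.mapParam f)) (Δ.map (.mapParam f)) (A.mapParam f) (B.mapParam f)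
      (by simpa [mapLNS] using ih f hf)
  | andr n m G H Γ Δ A B _ _ ih₁ ih₂ =>
    intro f hf
    simpa [mapLNS, Formula.mapParam] using LNIFh.andr n m (mapLNS f G) (mapLNS f H)
      (Γ.map (.mapParam f)) (Δ.map (.mapParam f)) (A.mapParam f) (B.mapParam f)
      (by simpa [mapLNS] using ih₁ f hf) (by simpa [mapLNS] using ih₂ f hf)
  | orl n m G H Γ Δ A B _ _ ih₁ ih₂ =>
    intro f hf
    simpa [mapLNS, Formula.mapParam] using LNIFh.orl n m (mapLNS f G) (mapLNS f H)
      (Γ.map (.mapParam f)) (Δ.map (.mapParam f)) (A.mapParam f) (B.mapParam f)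
      (by simpa [mapLNS] using ih₁ f hf) (by simpa [mapLNS] using ih₂ f hf)
  | orr n G H Γ Δ A B _ ih =>
    intro f hf
    simpa [mapLNS, Formula.mapParam] using LNIFh.orr n (mapLNS f G) (mapLNS f H)
      (Γ.map (.mapParam f)) (Δ.map (.mapParam f)) (A.mapParam f) (B.mapParam f)
      (by simpa [mapLNS] using ih f hf)
  | impl n m G H Γ Δ A B _ _ ih₁ ih₂ =>
    intro f hf
    simpa [mapLNS, Formula.mapParam] using LNIFh.impl n m (mapLNS f G) (mapLNS f H)
      (Γ.map (.mapParam f)) (Δ.map (.mapParam f)) (A.mapParam f) (B.mapParam f)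
      (by simpa [mapLNS] using ih₁ f hf)
      (by simpa [mapLNS, Formula.mapParam] using ih₂ f hf)
  | impr1 n G Γ Δ A B _ ih =>
    intro f hf
    simpa [mapLNS, Formula.mapParam] using LNIFh.impr1 n (mapLNS f G)
      (Γ.map (.mapParam f)) (Δ.map (.mapParam f)) (A.mapParam f) (B.mapParam f)
      (by simpa [mapLNS] using ih f hf)
  | impr2 n m G H Γ₁ Δ₁ Γ₂ Δ₂ A B _ _ ih₁ ih₂ =>
    intro f hf
    simpa [mapLNS, Formula.mapParam] using LNIFh.impr2 n m (mapLNS f G) (mapLNS f H)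
      (Γ₁.map (.mapParam f)) (Δ₁.map (.mapParam f)) (Γ₂.map (.mapParam f)) (Δ₂.map (.mapParam f))
      (A.mapParam f) (B.mapParam f)
      (by simpa [mapLNS] using ih₁ f hf)
      (by simpa [mapLNS, Formula.mapParam] using ih₂ f hf)
  | lift n G H Γ₁ Δ₁ Γ₂ Δ₂ A _ ih =>
    intro f hf
    simpa [mapLNS] using LNIFh.lift n (mapLNS f G) (mapLNS f H)
      (Γ₁.map (.mapParam f)) (Δ₁.map (.mapParam f)) (Γ₂.map (.mapParam f)) (Δ₂.map (.mapParam f))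
      (A.mapParam f) (by simpa [mapLNS] using ih f hf)
  | alll n G H Γ Δ A x c _ ih =>
    intro f hf
    simpa [mapLNS, Formula.mapParam] using LNIFh.alll n (mapLNS f G) (mapLNS f H)
      (Γ.map (.mapParam f)) (Δ.map (.mapParam f)) (A.mapParam f) x (f c)
      (by simpa [mapLNS, Formula.mapParam, Formula.mapParam_substP] using ih f hf)
  | allr1 n G Γ Δ A x c hc _ ih =>
    intro f hf
    obtain ⟨g, hg, hfg, hgc⟩ := hf.eigen hc
    rw [hfg]
    simpa [mapLNS, Formula.mapParam] using LNIFh.allr1 n (mapLNS g G)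
      (Γ.map (.mapParam g)) (Δ.map (.mapParam g)) (A.mapParam g) x (g c)
      (by simpa [mapLNS, Formula.mapParam] using hgc)
      (by simpa [mapLNS, Formula.mapParam_substP] using ih g hg)
  | allr2 n m G H Γ₁ Δ₁ Γ₂ Δ₂ A x c hc _ _ ih₁ ih₂ =>
    intro f hf
    obtain ⟨g, hg, hfg, hgc⟩ := hf.eigen hc
    rw [hfg]
    simpa [mapLNS, Formula.mapParam] using LNIFh.allr2 n m (mapLNS g G) (mapLNS g H)
      (Γ₁.map (.mapParam g)) (Δ₁.map (.mapParam g)) (Γ₂.map (.mapParam g)) (Δ₂.map (.mapParam g))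
      (A.mapParam g) x (g c)
      (by simpa [mapLNS, Formula.mapParam] using hgc)
      (by simpa [mapLNS, Formula.mapParam_substP] using ih₁ g hg)
      (by simpa [mapLNS, Formula.mapParam] using ih₂ g hg)
  | exl n G H Γ Δ A x c hc _ ih =>
    intro f hf
    obtain ⟨g, hg, hfg, hgc⟩ := hf.eigen hc
    rw [hfg]
    simpa [mapLNS, Formula.mapParam] using LNIFh.exl n (mapLNS g G) (mapLNS g H)
      (Γ.map (.mapParam g)) (Δ.map (.mapParam g)) (A.mapParam g) x (g c)
      (by simpa [mapLNS, Formula.mapParam] using hgc)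
      (by simpa [mapLNS, Formula.mapParam_substP] using ih g hg)
  | exr n G H Γ Δ A x c _ ih =>
    intro f hf
    simpa [mapLNS, Formula.mapParam] using LNIFh.exr n (mapLNS f G) (mapLNS f H)
      (Γ.map (.mapParam f)) (Δ.map (.mapParam f)) (A.mapParam f) x (f c)
      (by simpa [mapLNS, Formula.mapParam_substP] using ih f hf)

/-- **hp-admissibility of `(sub)`.** If `𝒢` has an `LNIF` derivation of height
`h`, then `𝒢[b/a]` has one of height at most `h`. -/
theorem sub_hp_admissible {α : Type} [DecidableEq α] (a b : α)
    (G : LNS α) (h : ℕ) (hd : LNIFh h G) :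
    ∃ h' ≤ h, LNIFh h' (renLNS b a G) := by
  exact ⟨h, le_rfl, hd.map _ (.inr ⟨a, b, rfl⟩)⟩
end

section
/- (m-invertibility for left implication) Let k₁,…,kₙ ∈ ℕ with k₁+⋯+kₙ ≥ 1, and write A^k for k copies of a formula A in a multiset. If Γ₁,(A⊃B)^{k₁} ⊢ Δ₁ ∥ ⋯ ∥ Γₙ,(A⊃B)^{kₙ} ⊢ Δₙ is derivable in LNIF, then both Γ₁,B^{k₁} ⊢ Δ₁ ∥ ⋯ ∥ Γₙ,B^{kₙ} ⊢ Δₙ and Γ₁,(A⊃B)^{k₁} ⊢ Δ₁,A^{k₁} ∥ ⋯ ∥ Γₙ,(A⊃B)^{kₙ} ⊢ Δₙ,A^{kₙ} are derivable in LNIF. -/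
/-- Derivability in the linear nested sequent calculus `LNIF`. -/
inductive LNIF {α : Type} : LNS α → Prop
  | id1 (G H : LNS α) (Γ Δ : Multiset (Formula α)) (p : ℕ) (ts : List (ℕ ⊕ α)) :
      LNIF (G ++ [(Γ + {Formula.atom p ts}, {Formula.atom p ts} + Δ)] ++ H)
  | id2 (G H F : LNS α) (Γ₁ Δ₁ Γ₂ Δ₂ : Multiset (Formula α)) (p : ℕ) (ts : List (ℕ ⊕ α)) :
      LNIF (G ++ [(Γ₁ + {Formula.atom p ts}, Δ₁)] ++ H ++ [(Γ₂, {Formula.atom p ts} + Δ₂)] ++ F)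
  | botl (G H : LNS α) (Γ Δ : Multiset (Formula α)) :
      LNIF (G ++ [(Γ + {Formula.bot}, Δ)] ++ H)
  | andl (G H : LNS α) (Γ Δ : Multiset (Formula α)) (A B : Formula α) :
      LNIF (G ++ [(Γ + {A, B}, Δ)] ++ H) →
      LNIF (G ++ [(Γ + {A.and B}, Δ)] ++ H)
  | andr (G H : LNS α) (Γ Δ : Multiset (Formula α)) (A B : Formula α) :
      LNIF (G ++ [(Γ, Δ + {A})] ++ H) → LNIF (G ++ [(Γ, Δ + {B})] ++ H) →
      LNIF (G ++ [(Γ, Δ + {A.and B})] ++ H)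
  | orl (G H : LNS α) (Γ Δ : Multiset (Formula α)) (A B : Formula α) :
      LNIF (G ++ [(Γ + {A}, Δ)] ++ H) → LNIF (G ++ [(Γ + {B}, Δ)] ++ H) →
      LNIF (G ++ [(Γ + {A.or B}, Δ)] ++ H)
  | orr (G H : LNS α) (Γ Δ : Multiset (Formula α)) (A B : Formula α) :
      LNIF (G ++ [(Γ, Δ + {A, B})] ++ H) →
      LNIF (G ++ [(Γ, Δ + {A.or B})] ++ H)
  | impl (G H : LNS α) (Γ Δ : Multiset (Formula α)) (A B : Formula α) :
      LNIF (G ++ [(Γ + {B}, Δ)] ++ H) →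
      LNIF (G ++ [(Γ + {A.imp B}, {A} + Δ)] ++ H) →
      LNIF (G ++ [(Γ + {A.imp B}, Δ)] ++ H)
  | impr1 (G : LNS α) (Γ Δ : Multiset (Formula α)) (A B : Formula α) :
      LNIF (G ++ [(Γ, Δ), ({A}, {B})]) →
      LNIF (G ++ [(Γ, Δ + {A.imp B})])
  | impr2 (G H : LNS α) (Γ₁ Δ₁ Γ₂ Δ₂ : Multiset (Formula α)) (A B : Formula α) :
      LNIF (G ++ [(Γ₁, Δ₁), ({A}, {B}), (Γ₂, Δ₂)] ++ H) →
      LNIF (G ++ [(Γ₁, Δ₁), (Γ₂, Δ₂ + {A.imp B})] ++ H) →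
      LNIF (G ++ [(Γ₁, Δ₁ + {A.imp B}), (Γ₂, Δ₂)] ++ H)
  | lift (G H : LNS α) (Γ₁ Δ₁ Γ₂ Δ₂ : Multiset (Formula α)) (A : Formula α) :
      LNIF (G ++ [(Γ₁ + {A}, Δ₁), (Γ₂ + {A}, Δ₂)] ++ H) →
      LNIF (G ++ [(Γ₁ + {A}, Δ₁), (Γ₂, Δ₂)] ++ H)
  | alll (G H : LNS α) (Γ Δ : Multiset (Formula α)) (A : Formula α) (x : ℕ) (a : α) :
      LNIF (G ++ [(Γ + {A.substP a x, Formula.all x A}, Δ)] ++ H) →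
      LNIF (G ++ [(Γ + {Formula.all x A}, Δ)] ++ H)
  | allr1 (G : LNS α) (Γ Δ : Multiset (Formula α)) (A : Formula α) (x : ℕ) (a : α) :
      ¬ occursInLNS a (G ++ [(Γ, Δ + {Formula.all x A})]) →
      LNIF (G ++ [(Γ, Δ), (0, {A.substP a x})]) →
      LNIF (G ++ [(Γ, Δ + {Formula.all x A})])
  | allr2 (G H : LNS α) (Γ₁ Δ₁ Γ₂ Δ₂ : Multiset (Formula α)) (A : Formula α) (x : ℕ) (a : α) :
      ¬ occursInLNS a (G ++ [(Γ₁, Δ₁ + {Formula.all x A}), (Γ₂, Δ₂)] ++ H) →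
      LNIF (G ++ [(Γ₁, Δ₁), (0, {A.substP a x}), (Γ₂, Δ₂)] ++ H) →
      LNIF (G ++ [(Γ₁, Δ₁), (Γ₂, Δ₂ + {Formula.all x A})] ++ H) →
      LNIF (G ++ [(Γ₁, Δ₁ + {Formula.all x A}), (Γ₂, Δ₂)] ++ H)
  | exl (G H : LNS α) (Γ Δ : Multiset (Formula α)) (A : Formula α) (x : ℕ) (a : α) :
      ¬ occursInLNS a (G ++ [(Γ + {Formula.ex x A}, Δ)] ++ H) →
      LNIF (G ++ [(Γ + {A.substP a x}, Δ)] ++ H) →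
      LNIF (G ++ [(Γ + {Formula.ex x A}, Δ)] ++ H)
  | exr (G H : LNS α) (Γ Δ : Multiset (Formula α)) (A : Formula α) (x : ℕ) (a : α) :
      LNIF (G ++ [(Γ, {A.substP a x} + Δ)] ++ H) →
      LNIF (G ++ [(Γ, {Formula.ex x A} + Δ)] ++ H)

/-! ### Refinement of components -/

section Refinement

variable {α : Type} {A B P : Formula α} {Γ Γ' Δ Δ' : Multiset (Formula α)}
  {C C' : Multiset (Formula α) × Multiset (Formula α)}

/-- `C'` arises from the component `C` by replacing some antecedent occurrences of `A ⊃ B` by `B`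
and adding `m` copies of `A` to the succedent, for some `m` not exceeding the number of copies of
`A ⊃ B` that remain in the antecedent. -/
def Refines (A B : Formula α) (C C' : Multiset (Formula α) × Multiset (Formula α)) : Prop :=
  Multiset.Rel (fun P Q => P = Q ∨ (P = A.imp B ∧ Q = B)) C.1 C'.1 ∧
    ∃ m, Multiset.replicate m (A.imp B) ≤ C'.1 ∧ C'.2 = C.2 + Multiset.replicate m A

theorem rel_replace_refl (A B : Formula α) (Γ : Multiset (Formula α)) :
    Multiset.Rel (fun P Q => P = Q ∨ (P = A.imp B ∧ Q = B)) Γ Γ :=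
  Multiset.rel_refl_of_refl_on fun _ _ => Or.inl rfl

theorem Refines.refl (A B : Formula α) (C : Multiset (Formula α) × Multiset (Formula α)) :
    Refines A B C C :=
  ⟨rel_replace_refl A B _, 0, by simp, by simp⟩

theorem Refines.add_left (h : Refines A B (Γ, Δ) (Γ', Δ')) (N : Multiset (Formula α)) :
    Refines A B (Γ + N, Δ) (Γ' + N, Δ') := by
  obtain ⟨h, m, hm, e⟩ := h
  exact ⟨h.add (rel_replace_refl A B N), m, hm.trans (Multiset.le_add_right _ _), e⟩

theorem rel_replace_inv
    (h : Multiset.Rel (fun P Q => P = Q ∨ (P = A.imp B ∧ Q = B)) (Γ + {P}) Γ') :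
    (∃ M, Γ' = M + {P} ∧ Multiset.Rel (fun P Q => P = Q ∨ (P = A.imp B ∧ Q = B)) Γ M) ∨
    (P = A.imp B ∧
      ∃ M, Γ' = M + {B} ∧ Multiset.Rel (fun P Q => P = Q ∨ (P = A.imp B ∧ Q = B)) Γ M) := by
  rw [add_comm, Multiset.singleton_add, Multiset.rel_cons_left] at h
  obtain ⟨Q, M, hQ, hM, rfl⟩ := h
  have e : ∀ Q : Formula α, Q ::ₘ M = M + {Q} := fun Q => by
    rw [add_comm, Multiset.singleton_add]
  rcases hQ with rfl | ⟨rfl, rfl⟩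
  · exact Or.inl ⟨M, e _, hM⟩
  · exact Or.inr ⟨rfl, M, e _, hM⟩

theorem replicate_le_of_ne {m : ℕ} {X P : Formula α} {M : Multiset (Formula α)} (hP : P ≠ X)
    (h : Multiset.replicate m X ≤ M + {P}) : Multiset.replicate m X ≤ M := by
  classical
  rw [← Multiset.le_count_iff_replicate_le] at h ⊢
  simpa [Multiset.count_singleton, hP.symm] using h

/-- A principal formula on the left other than `A ⊃ B` survives refinement, and it may be traded
for any `N` in both components. -/
theorem Refines.inv_left (h : Refines A B (Γ + {P}, Δ) C') (hP : P ≠ A.imp B) :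
    ∃ Γ' Δ', C' = (Γ' + {P}, Δ') ∧ ∀ N, Refines A B (Γ + N, Δ) (Γ' + N, Δ') := by
  obtain ⟨h, m, hm, e⟩ := h
  obtain ⟨Γ₀, Δ₀⟩ := C'
  rcases rel_replace_inv h with ⟨M, hM, hr⟩ | ⟨hX, -⟩
  · subst hM
    exact ⟨M, Δ₀, rfl,
      fun N => Refines.add_left (Γ := Γ) (Γ' := M) ⟨hr, m, replicate_le_of_ne hP hm, e⟩ N⟩
  · exact absurd hX hP

theorem Refines.inv_right (h : Refines A B (Γ, Δ + {P}) C') :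
    ∃ Γ' Δ', C' = (Γ', Δ' + {P}) ∧ ∀ N, Refines A B (Γ, Δ + N) (Γ', Δ' + N) := by
  obtain ⟨h, m, hm, e⟩ := h
  obtain ⟨Γ₀, Δ₀⟩ := C'
  refine ⟨Γ₀, Δ + Multiset.replicate m A, ?_, fun N => ⟨h, m, hm, ?_⟩⟩
  · simp only at e
    rw [e, add_right_comm]
  · simp only [add_right_comm]

theorem Refines.add_right (h : Refines A B (Γ, Δ) (Γ', Δ')) (N : Multiset (Formula α)) :
    Refines A B (Γ, Δ + N) (Γ', Δ' + N) := by
  obtain ⟨h, m, hm, e⟩ := h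
  refine ⟨h, m, hm, ?_⟩
  simp only at e ⊢
  rw [e, add_right_comm]

/-- The cases for a principal formula `A ⊃ B` on the left: if it is replaced by `B`, then `C'` refines
the left premise of `(⊃_l)`; if it is kept and some `A` is added to the succedent, then `C'` refines
the right premise; otherwise the succedent is unchanged and the rule can be reapplied. -/
theorem Refines.inv_imp (h : Refines A B (Γ + {A.imp B}, Δ) C') :
    Refines A B (Γ + {B}, Δ) C' ∨ Refines A B (Γ + {A.imp B}, {A} + Δ) C' ∨
      ∃ Γ', C' = (Γ' + {A.imp B}, Δ) ∧ ∀ N D, Refines A B (Γ + N, D) (Γ' + N, D) := by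
  obtain ⟨h, m, hm, e⟩ := h
  obtain ⟨Γ₀, Δ₀⟩ := C'
  simp only at e h hm
  rcases rel_replace_inv h with ⟨M, rfl, hr⟩ | ⟨-, M, rfl, hr⟩
  · right
    cases m with
    | zero =>
      right
      exact ⟨M, by simp [e], fun N D => ⟨hr.add (rel_replace_refl A B N), 0, by simp, by simp⟩⟩
    | succ m =>
      left
      refine ⟨h, m, (Multiset.replicate_le_replicate _ |>.2 (Nat.le_succ m)).trans hm, ?_⟩
      simp only
      rw [e, Multiset.replicate_succ, ← Multiset.singleton_add, ← add_assoc, add_comm Δ]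
  · exact Or.inl ⟨hr.add (rel_replace_refl A B {B}), m, hm, e⟩

/-- Every left occurrence `P` becomes some `Q` in the refinement, and adding `P` to another
antecedent is refined by adding `Q` there. -/
theorem Refines.inv_lift (h : Refines A B (Γ + {P}, Δ) C') :
    ∃ Q Γ' Δ', C' = (Γ' + {Q}, Δ') ∧ ∀ Γ₂ Δ₂ Γ₂' Δ₂', Refines A B (Γ₂, Δ₂) (Γ₂', Δ₂') →
      Refines A B (Γ₂ + {P}, Δ₂) (Γ₂' + {Q}, Δ₂') := by
  obtain ⟨h, m, hm, e⟩ := h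
  obtain ⟨Γ₀, Δ₀⟩ := C'
  rcases rel_replace_inv h with ⟨M, hM, hr⟩ | ⟨rfl, M, hM, hr⟩
  · subst hM
    exact ⟨P, M, Δ₀, rfl, fun _ _ _ _ h₂ => h₂.add_left _⟩
  · subst hM
    refine ⟨B, M, Δ₀, rfl, fun _ _ _ _ ⟨h₂, n, hn, e₂⟩ =>
      ⟨h₂.add ?_, n, hn.trans (Multiset.le_add_right _ _), e₂⟩⟩
    exact Multiset.Rel.cons (Or.inr ⟨rfl, rfl⟩) .zero

theorem Refines.params (h : Refines A B C C') {a : α}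
    (ha : (∃ D ∈ C'.1, a ∈ D.params) ∨ (∃ D ∈ C'.2, a ∈ D.params)) :
    (∃ D ∈ C.1, a ∈ D.params) ∨ (∃ D ∈ C.2, a ∈ D.params) := by
  obtain ⟨h, m, hm, e⟩ := h
  have key : ∀ D ∈ C'.1, a ∈ D.params → ∃ D ∈ C.1, a ∈ D.params := by
    intro D hD haD
    obtain ⟨E, hE, rfl | ⟨rfl, rfl⟩⟩ := Multiset.exists_mem_of_rel_of_mem
      (Multiset.rel_flip.2 h) hD
    · exact ⟨_, hE, haD⟩
    · exact ⟨_, hE, by simp [Formula.params, haD]⟩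
  rcases ha with ⟨D, hD, haD⟩ | ⟨D, hD, haD⟩
  · exact Or.inl (key D hD haD)
  · rw [e, Multiset.mem_add, Multiset.mem_replicate] at hD
    rcases hD with hD | ⟨hm0, rfl⟩
    · exact Or.inr ⟨D, hD, haD⟩
    · exact Or.inl (key (D.imp B)
        (Multiset.mem_of_le hm (Multiset.mem_replicate.2 ⟨hm0, rfl⟩))
        (by simp [Formula.params, haD]))

theorem occursInLNS_of_forall₂ {S S' : LNS α} (h : List.Forall₂ (Refines A B) S S') {a : α}
    (ha : occursInLNS a S') : occursInLNS a S := by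
  induction h with
  | nil => exact ha
  | cons hc _ ih =>
    obtain ⟨C, hC, hCa⟩ := ha
    rcases List.mem_cons.1 hC with rfl | hC
    · exact ⟨_, List.mem_cons_self, hc.params hCa⟩
    · obtain ⟨D, hD, hDa⟩ := ih ⟨C, hC, hCa⟩
      exact ⟨D, List.mem_cons_of_mem _ hD, hDa⟩

end Refinement

/-! ### Splitting pointwise related lists -/

section ListInversion

variable {β : Type} {R : β → β → Prop} {G H S : List β} {c d : β}

theorem forall₂_append_inv (h : List.Forall₂ R (G ++ H) S) :
    ∃ G' H', S = G' ++ H' ∧ List.Forall₂ R G G' ∧ List.Forall₂ R H H' := by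
  induction G generalizing S with
  | nil => exact ⟨[], S, rfl, .nil, h⟩
  | cons c G ih =>
    cases h with | cons hc h =>
    obtain ⟨G', H', rfl, hG, hH⟩ := ih h
    exact ⟨_ :: G', H', rfl, .cons hc hG, hH⟩

theorem forall₂_single_inv (h : List.Forall₂ R (G ++ [c] ++ H) S) :
    ∃ G' c' H', S = G' ++ [c'] ++ H' ∧ List.Forall₂ R G G' ∧ R c c' ∧ List.Forall₂ R H H' := by
  obtain ⟨K, H', rfl, hK, hH⟩ := forall₂_append_inv h
  obtain ⟨G', L, rfl, hG, hL⟩ := forall₂_append_inv hK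
  cases hL with | cons hc hn =>
  cases hn
  exact ⟨G', _, H', rfl, hG, hc, hH⟩

theorem forall₂_pair_inv (h : List.Forall₂ R (G ++ [c, d] ++ H) S) :
    ∃ G' c' d' H', S = G' ++ [c', d'] ++ H' ∧ List.Forall₂ R G G' ∧ R c c' ∧ R d d' ∧
      List.Forall₂ R H H' := by
  obtain ⟨K, H', rfl, hK, hH⟩ := forall₂_append_inv h
  obtain ⟨G', L, rfl, hG, hL⟩ := forall₂_append_inv hK
  cases hL with | cons hc hn =>
  cases hn with | cons hd hn =>
  cases hn
  exact ⟨G', _, _, H', rfl, hG, hc, hd, hH⟩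

theorem forall₂_single {G' H' : List β} {c' : β} (hG : List.Forall₂ R G G') (hc : R c c')
    (hH : List.Forall₂ R H H') : List.Forall₂ R (G ++ [c] ++ H) (G' ++ [c'] ++ H') :=
  List.rel_append (List.rel_append hG (.cons hc .nil)) hH

theorem forall₂_pair {G' H' : List β} {c' d' : β} (hG : List.Forall₂ R G G') (hc : R c c')
    (hd : R d d') (hH : List.Forall₂ R H H') :
    List.Forall₂ R (G ++ [c, d] ++ H) (G' ++ [c', d'] ++ H') :=
  List.rel_append (List.rel_append hG (.cons hc (.cons hd .nil))) hH

theorem forall₂_triple {G' H' : List β} {c' d' e e' : β} (hG : List.Forall₂ R G G') (hc : R c c')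
    (hd : R d d') (he : R e e') (hH : List.Forall₂ R H H') :
    List.Forall₂ R (G ++ [c, d, e] ++ H) (G' ++ [c', d', e'] ++ H') :=
  List.rel_append (List.rel_append hG (.cons hc (.cons hd (.cons he .nil)))) hH

end ListInversion

/-! ### Refinement preserves derivability -/

/-- Derivability is preserved when every component is replaced by a refinement of it. -/
theorem LNIF.refines {α : Type} {A B : Formula α} {S : LNS α} (h : LNIF S) :
    ∀ S', List.Forall₂ (Refines A B) S S' → LNIF S' := by
  induction h with
  | id1 G H Γ Δ p ts =>
    intro S' hS
    obtain ⟨G', c', H', rfl, hG, hc, hH⟩ := forall₂_single_inv hS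
    obtain ⟨Γ', Δ', rfl, hr⟩ := hc.inv_left (by simp)
    have hc := hr {Formula.atom p ts}
    rw [add_comm _ Δ] at hc
    obtain ⟨_, Δ', e, -⟩ := hc.inv_right
    cases e
    rw [add_comm Δ']
    exact .id1 ..
  | id2 G H F Γ₁ Δ₁ Γ₂ Δ₂ p ts =>
    intro S' hS
    obtain ⟨K, d', F', rfl, hK, hd, hF⟩ := forall₂_single_inv hS
    obtain ⟨G', c', H', rfl, hG, hc, hH⟩ := forall₂_single_inv hK
    obtain ⟨Γ₁', Δ₁', rfl, -⟩ := hc.inv_left (by simp)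
    rw [add_comm _ Δ₂] at hd
    obtain ⟨Γ₂', Δ₂', rfl, -⟩ := hd.inv_right
    rw [add_comm Δ₂']
    exact .id2 ..
  | botl G H Γ Δ =>
    intro S' hS
    obtain ⟨G', c', H', rfl, hG, hc, hH⟩ := forall₂_single_inv hS
    obtain ⟨Γ', Δ', rfl, hr⟩ := hc.inv_left (by simp)
    exact .botl ..
  | andl G H Γ Δ C D _ ih =>
    intro S' hS
    obtain ⟨G', c', H', rfl, hG, hc, hH⟩ := forall₂_single_inv hS
    obtain ⟨Γ', Δ', rfl, hr⟩ := hc.inv_left (by simp)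
    exact .andl _ _ _ _ _ _ (ih _ (forall₂_single hG (hr _) hH))
  | andr G H Γ Δ C D _ _ ih₁ ih₂ =>
    intro S' hS
    obtain ⟨G', c', H', rfl, hG, hc, hH⟩ := forall₂_single_inv hS
    obtain ⟨Γ', Δ', rfl, hr⟩ := hc.inv_right
    exact .andr _ _ _ _ _ _ (ih₁ _ (forall₂_single hG (hr _) hH))
      (ih₂ _ (forall₂_single hG (hr _) hH))
  | orl G H Γ Δ C D _ _ ih₁ ih₂ =>
    intro S' hS
    obtain ⟨G', c', H', rfl, hG, hc, hH⟩ := forall₂_single_inv hS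
    obtain ⟨Γ', Δ', rfl, hr⟩ := hc.inv_left (by simp)
    exact .orl _ _ _ _ _ _ (ih₁ _ (forall₂_single hG (hr _) hH))
      (ih₂ _ (forall₂_single hG (hr _) hH))
  | orr G H Γ Δ C D _ ih =>
    intro S' hS
    obtain ⟨G', c', H', rfl, hG, hc, hH⟩ := forall₂_single_inv hS
    obtain ⟨Γ', Δ', rfl, hr⟩ := hc.inv_right
    exact .orr _ _ _ _ _ _ (ih _ (forall₂_single hG (hr _) hH))
  | impl G H Γ Δ C D _ _ ih₁ ih₂ =>
    intro S' hS
    obtain ⟨G', c', H', rfl, hG, hc, hH⟩ := forall₂_single_inv hS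
    by_cases hX : C.imp D = A.imp B
    · cases hX
      -- In the first two cases a premise, suitably refined, already is the goal.
      rcases hc.inv_imp with hc | hc | ⟨Γ', rfl, hr⟩
      · exact ih₁ _ (forall₂_single hG hc hH)
      · exact ih₂ _ (forall₂_single hG hc hH)
      · exact .impl _ _ _ _ _ _ (ih₁ _ (forall₂_single hG (hr _ _) hH))
          (ih₂ _ (forall₂_single hG (hr _ _) hH))
    · obtain ⟨Γ', Δ', rfl, hr⟩ := hc.inv_left hX
      refine .impl _ _ _ _ _ _ (ih₁ _ (forall₂_single hG (hr _) hH))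
          (ih₂ _ (forall₂_single hG ?_ hH))
      rw [add_comm {C} Δ, add_comm {C} Δ']
      exact (hr _).add_right _
  | impr1 G Γ Δ C D _ ih =>
    intro S' hS
    obtain ⟨G', L, rfl, hG, hL⟩ := forall₂_append_inv hS
    cases hL with | cons hc hn =>
    cases hn
    obtain ⟨Γ', Δ', rfl, hr⟩ := hc.inv_right
    exact .impr1 _ _ _ _ _ (ih _ (List.rel_append hG
      (.cons (by simpa using hr 0) (.cons (.refl _ _ _) .nil))))
  | impr2 G H Γ₁ Δ₁ Γ₂ Δ₂ C D _ _ ih₁ ih₂ =>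
    intro S' hS
    obtain ⟨G', c', ⟨Γ₂', Δ₂'⟩, H', rfl, hG, hc, hd, hH⟩ := forall₂_pair_inv hS
    obtain ⟨Γ₁', Δ₁', rfl, hr⟩ := hc.inv_right
    have hc : Refines A B (Γ₁, Δ₁) (Γ₁', Δ₁') := by simpa using hr 0
    exact .impr2 _ _ _ _ _ _ _ _ (ih₁ _ (forall₂_triple hG hc (.refl _ _ _) hd hH))
      (ih₂ _ (forall₂_pair hG hc (hd.add_right _) hH))
  | lift G H Γ₁ Δ₁ Γ₂ Δ₂ C _ ih =>
    intro S' hS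
    obtain ⟨G', c', ⟨Γ₂', Δ₂'⟩, H', rfl, hG, hc, hd, hH⟩ := forall₂_pair_inv hS
    obtain ⟨Q, Γ₁', Δ₁', rfl, hq⟩ := hc.inv_lift
    exact .lift _ _ _ _ _ _ _ (ih _ (forall₂_pair hG hc (hq _ _ _ _ hd) hH))
  | alll G H Γ Δ C x a _ ih =>
    intro S' hS
    obtain ⟨G', c', H', rfl, hG, hc, hH⟩ := forall₂_single_inv hS
    obtain ⟨Γ', Δ', rfl, hr⟩ := hc.inv_left (by simp)
    exact .alll _ _ _ _ _ _ _ (ih _ (forall₂_single hG (hr _) hH))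
  | allr1 G Γ Δ C x a ha _ ih =>
    intro S' hS
    have ha' := fun h => ha (occursInLNS_of_forall₂ hS h)
    obtain ⟨G', L, rfl, hG, hL⟩ := forall₂_append_inv hS
    cases hL with | cons hc hn =>
    cases hn
    obtain ⟨Γ', Δ', rfl, hr⟩ := hc.inv_right
    exact .allr1 _ _ _ _ _ _ ha' (ih _ (List.rel_append hG
      (.cons (by simpa using hr 0) (.cons (.refl _ _ _) .nil))))
  | allr2 G H Γ₁ Δ₁ Γ₂ Δ₂ C x a ha _ _ ih₁ ih₂ =>
    intro S' hS
    have ha' := fun h => ha (occursInLNS_of_forall₂ hS h)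
    obtain ⟨G', c', ⟨Γ₂', Δ₂'⟩, H', rfl, hG, hc, hd, hH⟩ := forall₂_pair_inv hS
    obtain ⟨Γ₁', Δ₁', rfl, hr⟩ := hc.inv_right
    have hc : Refines A B (Γ₁, Δ₁) (Γ₁', Δ₁') := by simpa using hr 0
    exact .allr2 _ _ _ _ _ _ _ _ _ ha' (ih₁ _ (forall₂_triple hG hc (.refl _ _ _) hd hH))
      (ih₂ _ (forall₂_pair hG hc (hd.add_right _) hH))
  | exl G H Γ Δ C x a ha _ ih =>
    intro S' hS
    have ha' := fun h => ha (occursInLNS_of_forall₂ hS h)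
    obtain ⟨G', c', H', rfl, hG, hc, hH⟩ := forall₂_single_inv hS
    obtain ⟨Γ', Δ', rfl, hr⟩ := hc.inv_left (by simp)
    exact .exl _ _ _ _ _ _ _ ha' (ih _ (forall₂_single hG (hr _) hH))
  | exr G H Γ Δ C x a _ ih =>
    intro S' hS
    obtain ⟨G', c', H', rfl, hG, hc, hH⟩ := forall₂_single_inv hS
    rw [add_comm _ Δ] at hc
    obtain ⟨Γ', Δ', rfl, hr⟩ := hc.inv_right
    rw [add_comm Δ']
    refine .exr _ _ _ _ _ _ a (ih _ (forall₂_single hG ?_ hH))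
    rw [add_comm _ Δ, add_comm _ Δ']
    exact hr _

/-- **m-invertibility of `(⊃_l)`.** With `k₁ + ⋯ + kₙ ≥ 1` copies distributed
over the `n ≥ 1` components: derivability of `Γ₁,(A⊃B)^{k₁} ⊢ Δ₁ ∥ ⋯` gives
derivability of both `Γ₁,B^{k₁} ⊢ Δ₁ ∥ ⋯` and
`Γ₁,(A⊃B)^{k₁} ⊢ Δ₁,A^{k₁} ∥ ⋯`. -/
theorem m_invertibility_imp {α : Type} (n : ℕ)
    (Γs Δs : Fin (n + 1) → Multiset (Formula α)) (k : Fin (n + 1) → ℕ)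
    (hk : 1 ≤ ∑ i, k i) (A B : Formula α)
    (hd : LNIF (List.ofFn (fun i => (Γs i + Multiset.replicate (k i) (A.imp B), Δs i)))) :
    LNIF (List.ofFn (fun i => (Γs i + Multiset.replicate (k i) B, Δs i))) ∧
    LNIF (List.ofFn (fun i =>
      (Γs i + Multiset.replicate (k i) (A.imp B),
       Δs i + Multiset.replicate (k i) A))) := by
  have ofFn : ∀ f g : Fin (n + 1) → Multiset (Formula α) × Multiset (Formula α),
      (∀ i, Refines A B (f i) (g i)) →
        List.Forall₂ (Refines A B) (List.ofFn f) (List.ofFn g) := fun f g h => by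
    rw [List.forall₂_iff_get]
    refine ⟨by simp, fun i _ _ => ?_⟩
    rw [List.get_ofFn, List.get_ofFn]
    exact h _
  refine ⟨hd.refines _ (ofFn _ _ fun i => ⟨?_, 0, by simp, by simp⟩),
    hd.refines _ (ofFn _ _ fun i => ⟨rel_replace_refl A B _, k i, ?_, rfl⟩)⟩
  · refine (rel_replace_refl A B _).add ?_
    rw [Multiset.rel_replicate_left]
    refine ⟨by simp, fun Q hQ => Or.inr ⟨rfl, Multiset.eq_of_mem_replicate hQ⟩⟩
  · exact Multiset.le_add_left _ _
end
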